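/- Let f ∈ L¹([−π,π]) be real-valued and even. Then for every n there exist a real unitary n×n matrix V_n and orderings of the eigenvalues of T_n(f) and H_n(f) such that Y_n = V_n Δ_n V_nᵀ with Δ_n = diag_{i=1,…,n}((−1)^{i+1}), T_n(f) = V_n D_n V_nᵀ with D_n = diag_{i=1,…,n}(λ_i(T_n(f))), H_n(f) = V_n Δ_n D_n V_nᵀ, and λ_i(H_n(f)) = (−1)^{i+1} λ_i(T_n(f)) for i = 1,…,n. In particular, if f is not almost everywhere constant, then all eigenvalues of H_n(f) lie in (m_f, M_f) ∪ (−M_f, −m_f), where m_f = ess inf_{[−π,π]} f and M_f = ess sup_{[−π,π]} f. -/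

import Mathlib

open MeasureTheory Matrix Filter

/-- The `k`-th Fourier coefficient of `f : ℝ → ℂ` on `[-π, π]`. -/
noncomputable def fourierCoef (f : ℝ → ℂ) (k : ℤ) : ℂ :=
  (1 / (2 * Real.pi)) * ∫ x in (-Real.pi)..Real.pi, f x * Complex.exp (-Complex.I * k * x)

/-- The `n × n` Toeplitz matrix generated by `f` (real version). -/
noncomputable def toeplitzR (f : ℝ → ℂ) (n : ℕ) : Matrix (Fin n) (Fin n) ℝ :=
  Matrix.of fun i j => (fourierCoef f ((i : ℤ) - (j : ℤ))).re

/-- The `n × n` exchange (flip) matrix `Y_n`. -/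
def flipM (n : ℕ) : Matrix (Fin n) (Fin n) ℝ :=
  Matrix.of fun i j => if (i : ℕ) + (j : ℕ) = n - 1 then 1 else 0

/-- Essential range of a real-valued function on a set. -/
def essRangeR (f : ℝ → ℝ) (s : Set ℝ) : Set ℝ :=
  {z : ℝ | ∀ ε > 0, 0 < volume {x ∈ s | |f x - z| < ε}}

/-!
The flip `Y` is a symmetric involution and reverses a Toeplitz matrix `T` into its transpose, so a
symmetric `T` commutes with `Y` and the two share an orthonormal basis of eigenvectors. The trace
of `Y` determines how often `1` and `-1` occur among its eigenvalues; since it equals the trace of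
`diag (1, -1, 1, …)`, the basis can be ordered so that the eigenvalues of `Y` alternate in sign.
Multiplying the two diagonalizations gives that of `Y * T`.

If `T v = c v` with `v ≠ 0` and `p x = ∑ j, v j * e^{ijx}`, then `∫ (f - c) * |p|² = 0`. As `p`
vanishes only at countably many points, `f - c` cannot have constant sign almost everywhere unless
`f = c` almost everywhere; hence `c` lies strictly between the essential bounds of `f`.
-/

open Complex Module Module.End Unitary
open scoped ComplexConjugate Polynomial Real
open Set (Icc)

/-! ### Simultaneous diagonalization -/

section SignVectors

variable {ι R : Type*} [Fintype ι] [Ring R] [CharZero R]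

theorem sum_add_card_eq_two_mul_card_eq_one {d : ι → R} (hd : ∀ i, d i = 1 ∨ d i = -1) :
    ∑ i, d i + Fintype.card ι = 2 * (Nat.card {i // d i = 1} : R) := by
  classical
  have hind (i : ι) : d i = 2 * (if d i = 1 then 1 else 0) - 1 := by
    rcases hd i with h | h <;> norm_num [h]
  rw [Finset.sum_congr rfl fun i _ => hind i, Finset.sum_sub_distrib, ← Finset.mul_sum,
    Finset.sum_boole, Nat.card_eq_fintype_card, Fintype.card_subtype]
  simp

theorem exists_perm_comp_eq_of_sum_eq {d e : ι → R}
    (hd : ∀ i, d i = 1 ∨ d i = -1) (he : ∀ i, e i = 1 ∨ e i = -1)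
    (hsum : ∑ i, d i = ∑ i, e i) : ∃ σ : Equiv.Perm ι, d ∘ σ = e := by
  classical
  have hcard : Nat.card {i // e i = 1} = Nat.card {i // d i = 1} := by
    have h : 2 * (Nat.card {i // e i = 1} : R) = 2 * Nat.card {i // d i = 1} := by
      rw [← sum_add_card_eq_two_mul_card_eq_one hd, ← sum_add_card_eq_two_mul_card_eq_one he, hsum]
    norm_cast at h
    lia
  obtain ⟨E⟩ := Finite.card_eq.mp hcard
  refine ⟨E.extendSubtype, funext fun i => ?_⟩
  by_cases hi : e i = 1
  · rw [hi]; exact E.extendSubtype_mem i hi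
  · rw [(he i).resolve_left hi]
    exact (hd _).resolve_left (E.extendSubtype_not_mem i hi)

end SignVectors

section SimultaneousDiagonalization

variable {𝕜 : Type*} [RCLike 𝕜] {ι : Type*} [Fintype ι]

theorem exists_orthonormalBasis_joint_eigenvectors {E : Type*} [NormedAddCommGroup E]
    [InnerProductSpace 𝕜 E] [FiniteDimensional 𝕜 E] {A B : E →ₗ[𝕜] E} (hA : A.IsSymmetric)
    (hB : B.IsSymmetric) (hAB : Commute A B) (hι : finrank 𝕜 E = Fintype.card ι) :
    ∃ (b : OrthonormalBasis ι 𝕜 E) (α β : ι → 𝕜),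
      ∀ i, A (b i) = α i • b i ∧ B (b i) = β i • b i := by
  have horth := LinearMap.IsSymmetric.orthogonalFamily_eigenspace_inf_eigenspace hA hB
  have hint := DirectSum.isInternal_ne_bot_iff.mpr
    (LinearMap.IsSymmetric.directSum_isInternal_of_commute hA hB hAB)
  have : Fintype {i : 𝕜 × 𝕜 // eigenspace A i.2 ⊓ eigenspace B i.1 ≠ ⊥} :=
    (WellFoundedGT.finite_ne_bot_of_iSupIndep horth.independent).fintype
  let b := hint.subordinateOrthonormalBasis hι (horth.comp Subtype.val_injective)
  let μ i := (hint.subordinateOrthonormalBasisIndex hι i (horth.comp Subtype.val_injective)).1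
  have hb i : b i ∈ eigenspace A (μ i).2 ⊓ eigenspace B (μ i).1 :=
    hint.subordinateOrthonormalBasis_subordinate hι i (horth.comp Subtype.val_injective)
  let e := (Fintype.equivFin ι).symm
  refine ⟨b.reindex e, fun i => (μ (e.symm i)).2, fun i => (μ (e.symm i)).1, fun i => ?_⟩
  rw [b.reindex_apply]
  exact ⟨mem_eigenspace_iff.mp (hb _).1, mem_eigenspace_iff.mp (hb _).2⟩

theorem exists_orthonormalBasis_joint_mulVec {A B : Matrix ι ι 𝕜} (hA : A.IsHermitian)
    (hB : B.IsHermitian) (hAB : Commute A B) :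
    ∃ (b : OrthonormalBasis ι 𝕜 (EuclideanSpace 𝕜 ι)) (α β : ι → 𝕜),
      ∀ i, A *ᵥ b i = α i • ⇑(b i) ∧ B *ᵥ b i = β i • ⇑(b i) := by
  classical
  have hcomm : Commute A.toEuclideanLin B.toEuclideanLin :=
    LinearMap.ext fun x => by simp [toLpLin_apply, mulVec_mulVec, hAB.eq]
  obtain ⟨b, α, β, h⟩ := exists_orthonormalBasis_joint_eigenvectors (ι := ι)
    (isSymmetric_toEuclideanLin_iff.mpr hA) (isSymmetric_toEuclideanLin_iff.mpr hB) hcomm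
    finrank_euclideanSpace
  exact ⟨b, α, β, fun i => ⟨congrArg WithLp.ofLp (h i).1, congrArg WithLp.ofLp (h i).2⟩⟩

variable [DecidableEq ι]

/-- The unitary matrix whose `j`-th column is the `j`-th vector of the orthonormal basis `b`,
used to turn bases of eigenvectors into diagonalizations. -/
noncomputable def columnUnitary (b : OrthonormalBasis ι 𝕜 (EuclideanSpace 𝕜 ι)) :
    unitaryGroup ι 𝕜 :=
  ⟨(EuclideanSpace.basisFun ι 𝕜).toBasis.toMatrix b,
    (EuclideanSpace.basisFun ι 𝕜).toMatrix_orthonormalBasis_mem_unitary b⟩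

theorem columnUnitary_apply (b : OrthonormalBasis ι 𝕜 (EuclideanSpace 𝕜 ι)) (i j : ι) :
    columnUnitary b i j = b j i :=
  rfl

theorem eq_conjStarAlgAut_columnUnitary_diagonal {A : Matrix ι ι 𝕜}
    {b : OrthonormalBasis ι 𝕜 (EuclideanSpace 𝕜 ι)} {α : ι → 𝕜}
    (h : ∀ i, A *ᵥ b i = α i • ⇑(b i)) :
    A = conjStarAlgAut 𝕜 _ (columnUnitary b) (diagonal α) := by
  have hcol : A * columnUnitary b = columnUnitary b * diagonal α := by
    ext i j
    rw [mul_diagonal, columnUnitary_apply, mul_comm]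
    exact congrFun (h j) i
  rw [conjStarAlgAut_apply, ← hcol, Matrix.mul_assoc,
    mul_star_self_of_mem (columnUnitary b).2, Matrix.mul_one]

theorem trace_conjStarAlgAut (U : unitaryGroup ι 𝕜) (A : Matrix ι ι 𝕜) :
    trace (conjStarAlgAut 𝕜 _ U A) = trace A := by
  rw [conjStarAlgAut_apply, trace_mul_cycle, coe_star_mul_self, Matrix.one_mul]

theorem exists_unitary_diagonal_of_involution {A Y : Matrix ι ι 𝕜} (hA : A.IsHermitian)
    (hY : Y.IsHermitian) (hYA : Commute Y A) (hYY : Y * Y = 1) {δ : ι → 𝕜}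
    (hδ : ∀ i, δ i = 1 ∨ δ i = -1) (htr : Y.trace = ∑ i, δ i) :
    ∃ (U : unitaryGroup ι 𝕜) (α : ι → 𝕜),
      Y = conjStarAlgAut 𝕜 _ U (diagonal δ) ∧ A = conjStarAlgAut 𝕜 _ U (diagonal α) := by
  obtain ⟨b, d, α, hb⟩ := exists_orthonormalBasis_joint_mulVec hY hA hYA
  have hYd := eq_conjStarAlgAut_columnUnitary_diagonal fun i => (hb i).1
  have hd (i : ι) : d i = 1 ∨ d i = -1 := by
    rw [hYd, ← map_mul, diagonal_mul_diagonal, EmbeddingLike.map_eq_one_iff,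
      diagonal_eq_one] at hYY
    exact mul_self_eq_one_iff.mp (congrFun hYY i)
  have hsum : ∑ i, d i = ∑ i, δ i := by rw [← htr, hYd, trace_conjStarAlgAut, trace_diagonal]
  obtain ⟨σ, rfl⟩ := exists_perm_comp_eq_of_sum_eq hd hδ hsum
  refine ⟨columnUnitary (b.reindex σ.symm), α ∘ σ, ?_, ?_⟩ <;>
    refine eq_conjStarAlgAut_columnUnitary_diagonal fun i => ?_ <;>
    simp [b.reindex_apply, hb]

end SimultaneousDiagonalization

/-! ### The flip matrix -/

theorem flipM_eq_permMatrix (n : ℕ) : flipM n = Fin.revPerm.permMatrix ℝ := by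
  ext i j
  simp only [flipM, of_apply, PEquiv.toMatrix_apply, Equiv.toPEquiv_apply,
    Option.mem_some_iff, Fin.revPerm_apply, Fin.ext_iff, Fin.val_rev]
  congr 1
  grind

theorem flipM_mul {n : ℕ} (A : Matrix (Fin n) (Fin n) ℝ) :
    flipM n * A = A.submatrix Fin.rev id := by
  rw [flipM_eq_permMatrix, PEquiv.toMatrix_toPEquiv_mul]; rfl

theorem mul_flipM {n : ℕ} (A : Matrix (Fin n) (Fin n) ℝ) :
    A * flipM n = A.submatrix id Fin.rev := by
  rw [flipM_eq_permMatrix, PEquiv.mul_toMatrix_toPEquiv]; rfl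

theorem flipM_mul_flipM (n : ℕ) : flipM n * flipM n = 1 := by
  rw [flipM_eq_permMatrix, ← permMatrix_mul]
  convert permMatrix_one
  ext; simp

theorem isHermitian_flipM (n : ℕ) : (flipM n).IsHermitian := by
  rw [flipM_eq_permMatrix, Matrix.IsHermitian, conjTranspose_permMatrix]
  rfl

theorem trace_flipM (n : ℕ) : (flipM n).trace = ∑ i : Fin n, (-1 : ℝ) ^ (i : ℕ) := by
  rw [Fin.sum_univ_eq_sum_range (fun i => (-1 : ℝ) ^ i) n, neg_one_geom_sum]
  simp only [trace, diag_apply, flipM, of_apply]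
  rw [Fin.sum_univ_eq_sum_range (fun i => if i + i = n - 1 then (1 : ℝ) else 0) n]
  obtain ⟨k, rfl | rfl⟩ := n.even_or_odd'
  · rw [if_pos (even_two_mul k)]
    exact Finset.sum_eq_zero fun i hi => if_neg (by grind)
  · rw [if_neg (by simp), Finset.sum_eq_single_of_mem k (by grind) fun i _ hi => if_neg (by lia),
      if_pos (by lia)]

theorem toeplitzR_submatrix_rev (f : ℝ → ℂ) (n : ℕ) :
    (toeplitzR f n).submatrix Fin.rev Fin.rev = (toeplitzR f n)ᵀ := by
  ext i j
  simp only [toeplitzR, submatrix_apply, transpose_apply, of_apply, Fin.val_rev]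
  grind

/-! ### Trigonometric polynomials -/

section TrigonometricPolynomial

theorem ae_eval_exp_ne_zero {p : ℂ[X]} (hp : p ≠ 0) : ∀ᵐ x : ℝ, p.eval (exp (x * I)) ≠ 0 := by
  have hinj : Function.Injective fun x : ℝ => (x * I : ℂ) := fun x y h => by simpa using h
  have hzeros : {x : ℝ | p.eval (exp (x * I)) = 0}.Countable := by
    convert! ((p.rootSet_finite ℂ).countable.preimage_cexp).preimage hinj
    ext x
    simp [Polynomial.mem_rootSet_of_ne hp]
  exact hzeros.ae_notMem volume

/-- The trigonometric polynomial `x ↦ ∑ j, v j * e^{ijx}`; its squared modulus is the weight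
representing the quadratic form of a Toeplitz matrix at `v` as an integral. -/
noncomputable def trigPoly {n : ℕ} (v : Fin n → ℝ) (x : ℝ) : ℂ :=
  ∑ j, v j * exp (j * x * I)

variable {n : ℕ} (v : Fin n → ℝ)

theorem continuous_trigPoly : Continuous (trigPoly v) := by
  unfold trigPoly
  fun_prop

theorem trigPoly_eq_eval_ofFn (x : ℝ) :
    trigPoly v x = (Polynomial.ofFn n fun j => (v j : ℂ)).eval (exp (x * I)) := by
  simp only [trigPoly, Polynomial.ofFn_eq_sum_monomial, Polynomial.eval_finsetSum,
    Polynomial.eval_monomial, ← exp_nat_mul, mul_assoc]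

variable {v} in
theorem ae_trigPoly_ne_zero (hv : v ≠ 0) : ∀ᵐ x, trigPoly v x ≠ 0 := by
  simp only [trigPoly_eq_eval_ofFn]
  refine ae_eval_exp_ne_zero fun h => hv <| funext fun j => ?_
  have := Polynomial.injective_ofFn n (h.trans (map_zero _).symm)
  exact ofReal_eq_zero.mp (congrFun this j)

theorem norm_trigPoly_sq (x : ℝ) :
    ‖trigPoly v x‖ ^ 2 = ∑ i, ∑ j, v i * v j * Real.cos (((i : ℤ) - (j : ℤ) : ℤ) * x) := by
  have hexpand : (‖trigPoly v x‖ : ℂ) ^ 2 =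
      ∑ i, ∑ j, (v i * v j : ℝ) * exp ((((i : ℤ) - (j : ℤ) : ℤ) * x : ℝ) * I) := by
    rw [← mul_conj', trigPoly, map_sum, Finset.sum_mul_sum]
    refine Finset.sum_congr rfl fun i _ => Finset.sum_congr rfl fun j _ => ?_
    rw [map_mul, conj_ofReal, ← Complex.exp_conj, mul_mul_mul_comm, ← exp_add, ofReal_mul]
    congr 2
    simp only [map_mul, map_natCast, conj_ofReal, conj_I]
    push_cast
    ring
  simpa only [← ofReal_pow, ofReal_re, re_sum, re_ofReal_mul, exp_ofReal_mul_I_re]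
    using congrArg re hexpand

end TrigonometricPolynomial

/-! ### The quadratic form of a Toeplitz matrix -/

theorem fourierCoef_ofReal_neg (f : ℝ → ℝ) (k : ℤ) :
    fourierCoef (fun x => f x) (-k) = conj (fourierCoef (fun x => f x) k) := by
  simp only [fourierCoef, map_mul, map_div₀, map_one, map_ofNat, conj_ofReal,
    ← intervalIntegral.intervalIntegral_conj, ← Complex.exp_conj, map_neg, conj_I, map_intCast]
  simp

-- The real parts of the Fourier coefficients of `f` are the coefficients of its even part.
theorem isHermitian_toeplitzR (f : ℝ → ℝ) (n : ℕ) :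
    (toeplitzR (fun x => f x) n).IsHermitian := by
  ext i j
  rw [conjTranspose_apply, star_trivial, toeplitzR, of_apply, of_apply, ← neg_sub,
    fourierCoef_ofReal_neg, conj_re]

theorem fourierCoef_ofReal_re {f : ℝ → ℝ} (hf : IntegrableOn f (Icc (-π) π)) (k : ℤ) :
    (fourierCoef (fun x => f x) k).re = (2 * π)⁻¹ * ∫ x in Icc (-π) π, f x * Real.cos (k * x) := by
  have hint : IntegrableOn (fun x : ℝ => (f x : ℂ) * exp (-I * k * x)) (Icc (-π) π) :=
    IntegrableOn.mul_continuousOn hf.ofReal (by fun_prop) isCompact_Icc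
  have hre (x : ℝ) : (f x * exp (-I * k * x)).re = f x * Real.cos (k * x) := by
    have : -I * k * x = ((-(k * x) : ℝ) : ℂ) * I := by push_cast; ring
    rw [re_ofReal_mul, this, exp_ofReal_mul_I_re, Real.cos_neg]
  have hconst : (1 / (2 * π) : ℂ) = ((2 * π)⁻¹ : ℝ) := by push_cast; rw [one_div]
  rw [fourierCoef, intervalIntegral.integral_of_le (neg_le_self Real.pi_pos.le),
    ← integral_Icc_eq_integral_Ioc, hconst, re_ofReal_mul]
  simp only [← hre]
  exact congrArg _ (integral_re hint).symm

theorem setIntegral_cos_int_mul (k : ℤ) :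
    ∫ x in Icc (-π) π, Real.cos (k * x) = if k = 0 then 2 * π else 0 := by
  rw [integral_Icc_eq_integral_Ioc,
    ← intervalIntegral.integral_of_le (neg_le_self Real.pi_pos.le)]
  split_ifs with hk
  · simp [hk, two_mul]
  · rw [intervalIntegral.integral_comp_mul_left _ (Int.cast_ne_zero.mpr hk), integral_cos]
    simp [Real.sin_int_mul_pi]

theorem toeplitzR_one (n : ℕ) : toeplitzR (fun _ => (1 : ℝ)) n = 1 := by
  ext i j
  rw [toeplitzR, of_apply, fourierCoef_ofReal_re (by simp), Matrix.one_apply]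
  simp only [one_mul, setIntegral_cos_int_mul, sub_eq_zero, Nat.cast_inj, Fin.val_inj]
  split_ifs
  · exact inv_mul_cancel₀ Real.two_pi_pos.ne'
  · exact mul_zero _

theorem dotProduct_toeplitzR_mulVec {f : ℝ → ℝ} (hf : IntegrableOn f (Icc (-π) π)) {n : ℕ}
    (v : Fin n → ℝ) : v ⬝ᵥ toeplitzR (fun x => f x) n *ᵥ v =
      (2 * π)⁻¹ * ∫ x in Icc (-π) π, f x * ‖trigPoly v x‖ ^ 2 := by
  let term (i j : Fin n) (x : ℝ) : ℝ := v i * v j * (f x * Real.cos (((i : ℤ) - (j : ℤ) : ℤ) * x))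
  have hint (i j : Fin n) : IntegrableOn (term i j) (Icc (-π) π) :=
    (IntegrableOn.mul_continuousOn hf (by fun_prop) isCompact_Icc).const_mul _
  have hexpand (x : ℝ) : f x * ‖trigPoly v x‖ ^ 2 = ∑ i, ∑ j, term i j x := by
    simp only [norm_trigPoly_sq, Finset.mul_sum, term, mul_left_comm]
  simp only [hexpand]
  rw [integral_finsetSum _ fun i _ => integrable_finsetSum _ fun j _ => hint i j]
  simp only [integral_finsetSum _ fun j _ => hint _ j, term, integral_const_mul, Finset.mul_sum,
    dotProduct, mulVec, toeplitzR, of_apply, fourierCoef_ofReal_re hf]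
  exact Finset.sum_congr rfl fun i _ => Finset.sum_congr rfl fun j _ => by ring

theorem dotProduct_self_eq_integral_norm_trigPoly_sq {n : ℕ} (v : Fin n → ℝ) :
    v ⬝ᵥ v = (2 * π)⁻¹ * ∫ x in Icc (-π) π, ‖trigPoly v x‖ ^ 2 := by
  simpa only [toeplitzR_one, one_mulVec, one_mul] using
    dotProduct_toeplitzR_mulVec (f := fun _ => 1) (by simp) v

theorem integral_sub_mul_norm_trigPoly_sq_eq_zero {f : ℝ → ℝ}
    (hf : IntegrableOn f (Icc (-π) π)) {n : ℕ} {v : Fin n → ℝ} {c : ℝ}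
    (hv : toeplitzR (fun x => f x) n *ᵥ v = c • v) :
    ∫ x in Icc (-π) π, (f x - c) * ‖trigPoly v x‖ ^ 2 = 0 := by
  have hw : ContinuousOn (fun x => ‖trigPoly v x‖ ^ 2) (Icc (-π) π) :=
    ((continuous_trigPoly v).norm.pow 2).continuousOn
  have hmean := dotProduct_toeplitzR_mulVec hf v
  rw [hv, dotProduct_smul, smul_eq_mul, dotProduct_self_eq_integral_norm_trigPoly_sq,
    mul_left_comm, mul_right_inj' (inv_ne_zero Real.two_pi_pos.ne')] at hmean
  simp only [sub_mul]
  rw [integral_sub (IntegrableOn.mul_continuousOn hf hw isCompact_Icc)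
    ((hw.integrableOn_compact isCompact_Icc).const_mul c), integral_const_mul, hmean, sub_self]

/-! ### Weighted means and the essential range -/

theorem essRangeR_eq_support_map {f : ℝ → ℝ} {s : Set ℝ} (hs : MeasurableSet s)
    (hf : AEMeasurable f (volume.restrict s)) :
    essRangeR f s = ((volume.restrict s).map f).support := by
  ext z
  rw [Metric.nhds_basis_ball.mem_measureSupport]
  refine forall₂_congr fun ε _ => ?_
  rw [Measure.map_apply_of_aemeasurable hf measurableSet_ball, Measure.restrict_apply' hs,
    Set.inter_comm]
  rfl

theorem ae_mem_essRangeR {f : ℝ → ℝ} {s : Set ℝ} (hs : MeasurableSet s)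
    (hf : AEMeasurable f (volume.restrict s)) : ∀ᵐ x ∂volume.restrict s, f x ∈ essRangeR f s := by
  rw [essRangeR_eq_support_map hs hf]
  exact ae_of_ae_map hf Measure.support_mem_ae

theorem ae_eq_zero_of_integral_mul_eq_zero {α : Type*} [MeasurableSpace α] {μ : Measure α}
    {g w : α → ℝ} (hg : 0 ≤ᵐ[μ] g) (hw : ∀ᵐ x ∂μ, 0 < w x)
    (hint : Integrable (fun x => g x * w x) μ) (h : ∫ x, g x * w x ∂μ = 0) : g =ᵐ[μ] 0 := by
  have hgw : 0 ≤ᵐ[μ] fun x => g x * w x := by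
    filter_upwards [hg, hw] with x hgx hwx using mul_nonneg hgx hwx.le
  filter_upwards [(integral_eq_zero_iff_of_nonneg_ae hgw hint).mp h, hw] with x hx hwx
  exact (mul_eq_zero.mp hx).resolve_right hwx.ne'

section WeightedMean

variable {f w : ℝ → ℝ} {s : Set ℝ} {c : ℝ} (hs : MeasurableSet s)
  (hf : AEMeasurable f (volume.restrict s)) (hconst : ¬∃ a : ℝ, ∀ᵐ x ∂volume.restrict s, f x = a)
  (hw : ∀ᵐ x ∂volume.restrict s, 0 < w x) (hint : IntegrableOn (fun x => (f x - c) * w x) s)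
  (h : ∫ x in s, (f x - c) * w x = 0)
include hs hf hconst hw hint h

theorem sInf_essRangeR_lt_of_integral_sub_mul_eq_zero :
    sInf (Real.toEReal '' essRangeR f s) < c := by
  by_contra! hle
  have hnonneg : ∀ᵐ x ∂volume.restrict s, 0 ≤ f x - c := by
    filter_upwards [ae_mem_essRangeR hs hf] with x hx
    exact sub_nonneg.mpr
      (EReal.coe_le_coe_iff.mp (hle.trans (sInf_le (Set.mem_image_of_mem _ hx))))
  refine hconst ⟨c, ?_⟩
  filter_upwards [ae_eq_zero_of_integral_mul_eq_zero hnonneg hw hint h] with x hx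
  exact sub_eq_zero.mp hx

theorem lt_sSup_essRangeR_of_integral_sub_mul_eq_zero :
    c < sSup (Real.toEReal '' essRangeR f s) := by
  by_contra! hle
  have hnonneg : ∀ᵐ x ∂volume.restrict s, 0 ≤ c - f x := by
    filter_upwards [ae_mem_essRangeR hs hf] with x hx
    exact sub_nonneg.mpr
      (EReal.coe_le_coe_iff.mp ((le_sSup (Set.mem_image_of_mem _ hx)).trans hle))
  have hneg (x : ℝ) : (c - f x) * w x = -((f x - c) * w x) := by ring
  have hint' : IntegrableOn (fun x => (c - f x) * w x) s := by
    simpa only [hneg] using! hint.neg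
  have h' : ∫ x in s, (c - f x) * w x = 0 := by
    simp only [hneg, integral_neg, h, neg_zero]
  refine hconst ⟨c, ?_⟩
  filter_upwards [ae_eq_zero_of_integral_mul_eq_zero hnonneg hw hint' h'] with x hx
  exact (sub_eq_zero.mp hx).symm

end WeightedMean

/-! ### Eigenvalues of Toeplitz and flipped Toeplitz matrices -/

theorem commute_flipM_toeplitzR (f : ℝ → ℝ) (n : ℕ) :
    Commute (flipM n) (toeplitzR (fun x => f x) n) := by
  have hsymm : (toeplitzR (fun x => f x) n)ᵀ = toeplitzR (fun x => f x) n :=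
    isHermitian_toeplitzR f n
  rw [commute_iff_eq, flipM_mul, mul_flipM]
  conv_lhs => rw [← hsymm, ← toeplitzR_submatrix_rev, submatrix_submatrix]
  rw [Fin.rev_involutive.comp_self]
  rfl

theorem exists_weight_of_mem_spectrum_toeplitzR {f : ℝ → ℝ} (hf : IntegrableOn f (Icc (-π) π))
    {n : ℕ} {c : ℝ} (hc : c ∈ spectrum ℝ (toeplitzR (fun x => f x) n)) :
    ∃ w : ℝ → ℝ, Continuous w ∧ (∀ᵐ x, 0 < w x) ∧ ∫ x in Icc (-π) π, (f x - c) * w x = 0 := by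
  rw [← Matrix.spectrum_toLin', ← hasEigenvalue_iff_mem_spectrum] at hc
  obtain ⟨v, hv⟩ := hc.exists_hasEigenvector
  refine ⟨fun x => ‖trigPoly v x‖ ^ 2, (continuous_trigPoly v).norm.pow 2, ?_,
    integral_sub_mul_norm_trigPoly_sq_eq_zero hf hv.apply_eq_smul⟩
  filter_upwards [ae_trigPoly_ne_zero hv.2] with x hx
  positivity

theorem sInf_essRangeR_lt_and_lt_sSup_of_mem_spectrum {f : ℝ → ℝ}
    (hf : IntegrableOn f (Icc (-π) π))
    (hconst : ¬∃ c : ℝ, ∀ᵐ x ∂volume.restrict (Icc (-π) π), f x = c) {n : ℕ} {c : ℝ}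
    (hc : c ∈ spectrum ℝ (toeplitzR (fun x => f x) n)) :
    sInf (Real.toEReal '' essRangeR f (Icc (-π) π)) < c ∧
      c < sSup (Real.toEReal '' essRangeR f (Icc (-π) π)) := by
  obtain ⟨w, hw_cont, hw_pos, hw⟩ := exists_weight_of_mem_spectrum_toeplitzR hf hc
  have hw_pos := ae_restrict_of_ae (s := Icc (-π) π) hw_pos
  have hint : IntegrableOn (fun x => (f x - c) * w x) (Icc (-π) π) :=
    IntegrableOn.mul_continuousOn (hf.sub (by simp)) hw_cont.continuousOn isCompact_Icc
  exact ⟨sInf_essRangeR_lt_of_integral_sub_mul_eq_zero measurableSet_Icc hf.aemeasurable hconst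
      hw_pos hint hw,
    lt_sSup_essRangeR_of_integral_sub_mul_eq_zero measurableSet_Icc hf.aemeasurable hconst
      hw_pos hint hw⟩

theorem stmt12_general
    (f : ℝ → ℝ)
    (hf_int : IntegrableOn f (Icc (-π) π)) :
    ∃ (V : (n : ℕ) → Matrix (Fin n) (Fin n) ℝ) (lamT lamH : (n : ℕ) → Fin n → ℝ),
      (∀ n : ℕ,
        V n * (V n)ᵀ = 1 ∧
        flipM n = V n * diagonal (fun i : Fin n => (-1 : ℝ) ^ (i : ℕ)) * (V n)ᵀ ∧
        toeplitzR (fun x => f x) n = V n * diagonal (lamT n) * (V n)ᵀ ∧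
        flipM n * toeplitzR (fun x => f x) n
          = V n * (diagonal (fun i : Fin n => (-1 : ℝ) ^ (i : ℕ))
              * diagonal (lamT n)) * (V n)ᵀ ∧
        (∀ i : Fin n, lamH n i = (-1 : ℝ) ^ (i : ℕ) * lamT n i)) ∧
      ((¬∃ c : ℝ, ∀ᵐ x ∂volume.restrict (Icc (-π) π), f x = c) →
        ∀ n : ℕ, ∀ i : Fin n,
          (sInf (Real.toEReal '' essRangeR f (Icc (-π) π))
              < (lamH n i : EReal) ∧
            (lamH n i : EReal)
              < sSup (Real.toEReal '' essRangeR f (Icc (-π) π))) ∨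
          (-sSup (Real.toEReal '' essRangeR f (Icc (-π) π))
              < (lamH n i : EReal) ∧
            (lamH n i : EReal)
              < -sInf (Real.toEReal '' essRangeR f (Icc (-π) π)))) := by
  have hsign (n : ℕ) (i : Fin n) : (-1 : ℝ) ^ (i : ℕ) = 1 ∨ (-1 : ℝ) ^ (i : ℕ) = -1 :=
    neg_one_pow_eq_or ℝ i
  choose U lamT hY hT using fun n => exists_unitary_diagonal_of_involution
    (isHermitian_toeplitzR f n) (isHermitian_flipM n) (commute_flipM_toeplitzR f n)
    (flipM_mul_flipM n) (hsign n) (trace_flipM n)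
  refine ⟨fun n => U n, lamT, fun n i => (-1) ^ (i : ℕ) * lamT n i, fun n => ⟨?_, hY n, hT n, ?_,
    fun _ => rfl⟩, fun hconst n i => ?_⟩
  · exact mul_star_self_of_mem (U n).2
  · rw [hY, hT, ← map_mul]
    rfl
  · have hspec : lamT n i ∈ spectrum ℝ (toeplitzR (fun x => f x) n) := by
      rw [hT, AlgEquiv.spectrum_eq, spectrum_diagonal]
      exact Set.mem_range_self i
    have hlam := sInf_essRangeR_lt_and_lt_sSup_of_mem_spectrum hf_int hconst hspec
    rcases hsign n i with h | h
    · exact .inl (by simpa only [h, one_mul] using hlam)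
    · refine .inr ?_
      simp only [h, neg_one_mul, EReal.coe_neg, EReal.neg_lt_neg_iff]
      exact hlam.symm

/-- Let `f ∈ L¹([-π,π])` be real-valued and even.  Then for every `n`
there exist a real unitary `V_n` and orderings of the eigenvalues of `T_n(f)` and `H_n(f)`
with `Y_n = V_n Δ_n V_nᵀ`, `T_n(f) = V_n D_n V_nᵀ`, `H_n(f) = V_n Δ_n D_n V_nᵀ` and
`λ_i(H_n(f)) = (-1)^{i+1} λ_i(T_n(f))`.  If moreover `f` is not a.e. constant, then all
eigenvalues of `H_n(f)` lie in `(m_f, M_f) ∪ (-M_f, -m_f)` (as extended reals), where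
`m_f = ess inf f` and `M_f = ess sup f` over `[-π,π]`. -/
theorem stmt12
    (f : ℝ → ℝ)
    (hf_int : IntegrableOn f (Set.Icc (-Real.pi) Real.pi))
    (hf_even : ∀ x, f (-x) = f x) :
    ∃ (V : (n : ℕ) → Matrix (Fin n) (Fin n) ℝ) (lamT lamH : (n : ℕ) → Fin n → ℝ),
      (∀ n : ℕ,
        V n * (V n)ᵀ = 1 ∧
        flipM n = V n * Matrix.diagonal (fun i : Fin n => ((-1 : ℝ)) ^ (i : ℕ)) * (V n)ᵀ ∧
        toeplitzR (fun x => (f x : ℂ)) n = V n * Matrix.diagonal (lamT n) * (V n)ᵀ ∧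
        flipM n * toeplitzR (fun x => (f x : ℂ)) n
          = V n * (Matrix.diagonal (fun i : Fin n => ((-1 : ℝ)) ^ (i : ℕ))
              * Matrix.diagonal (lamT n)) * (V n)ᵀ ∧
        (∀ i : Fin n, lamH n i = (-1 : ℝ) ^ (i : ℕ) * lamT n i)) ∧
      ((¬ ∃ c : ℝ, ∀ᵐ x ∂(volume.restrict (Set.Icc (-Real.pi) Real.pi)), f x = c) →
        ∀ n : ℕ, ∀ i : Fin n,
          (sInf ((fun t : ℝ => (t : EReal)) '' essRangeR f (Set.Icc (-Real.pi) Real.pi))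
              < (lamH n i : EReal) ∧
            (lamH n i : EReal)
              < sSup ((fun t : ℝ => (t : EReal)) '' essRangeR f (Set.Icc (-Real.pi) Real.pi))) ∨
          (-sSup ((fun t : ℝ => (t : EReal)) '' essRangeR f (Set.Icc (-Real.pi) Real.pi))
              < (lamH n i : EReal) ∧
            (lamH n i : EReal)
              < -sInf ((fun t : ℝ => (t : EReal)) '' essRangeR f (Set.Icc (-Real.pi) Real.pi)))) :=
  stmt12_general f hf_int
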